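/- arXiv:0801.0679 — 3 statements merged into one kernel-verified Lean document; each statement's English description precedes it below -/
import Mathlib

section
/- Assume the board 𝔖 has no isolated point, and let g ∈ 𝓕(𝔖,ℤ). Then g belongs to V(𝔖,ℤ) if and only if its reduction modulo 2, the function g̃ : 𝔖 → 𝔽₂ given by g̃(P) = g(P) mod 2, belongs to V(𝔖,𝔽₂). -/
def dirs : Finset (ℤ × ℤ) := {(1,0), (-1,0), (0,1), (0,-1)}

def chi (X : ℤ × ℤ) : (ℤ × ℤ) → ℤ := fun Y => if Y = X then 1 else 0

def chiSet (I : Finset (ℤ × ℤ)) : (ℤ × ℤ) → ℤ := fun P => if P ∈ I then 1 else 0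

def IsMove (S : Finset (ℤ × ℤ)) (g : (ℤ × ℤ) → ℤ) : Prop :=
  ∃ P d : ℤ × ℤ, d ∈ dirs ∧ P ∈ S ∧ P + d ∈ S ∧ P + d + d ∈ S ∧
    g = chi P + chi (P + d) - chi (P + d + d)

def IsMiddle (S : Finset (ℤ × ℤ)) (Q : ℤ × ℤ) : Prop :=
  ∃ P d : ℤ × ℤ, d ∈ dirs ∧ P ∈ S ∧ P + d ∈ S ∧ P + d + d ∈ S ∧ Q = P + d

def Neighbor (S : Finset (ℤ × ℤ)) (A B : ℤ × ℤ) : Prop :=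
  ∃ d ∈ dirs, A ∈ S ∧ A + d ∈ S ∧ A + d + d ∈ S ∧ B = A + d + d

def NoIsolatedPoint (S : Finset (ℤ × ℤ)) : Prop :=
  ∀ P ∈ S, ∃ Q, Relation.EqvGen (Neighbor S) P Q ∧ IsMiddle S Q

def IsResourceCount (S : Finset (ℤ × ℤ)) (π : (ℤ × ℤ) → ℝ) : Prop :=
  ∀ P d : ℤ × ℤ, d ∈ dirs → P ∈ S → P + d ∈ S → P + d + d ∈ S →
    π (P + d + d) ≤ π P + π (P + d)

def LegalMove (S I : Finset (ℤ × ℤ)) (g : (ℤ × ℤ) → ℤ) (I' : Finset (ℤ × ℤ)) : Prop :=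
  ∃ P d : ℤ × ℤ, d ∈ dirs ∧ P ∈ S ∧ P + d ∈ S ∧ P + d + d ∈ S ∧
    g = chi P + chi (P + d) - chi (P + d + d) ∧
    P ∈ I ∧ P + d ∈ I ∧ P + d + d ∉ I ∧
    I' = (I \ {P, P + d}) ∪ {P + d + d}

def Transforms (S : Finset (ℤ × ℤ)) :
    List ((ℤ × ℤ) → ℤ) → Finset (ℤ × ℤ) → Finset (ℤ × ℤ) → Prop
  | [], I, J => I = J
  | g :: L, I, J => ∃ I', LegalMove S I g I' ∧ Transforms S L I' J

def boxProd (g₁ g₂ : (ℤ × ℤ) → ℤ) : Sym2 (ℤ × ℤ) → ℤ :=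
  Sym2.lift ⟨fun A B => if A = B then g₁ A * g₂ A else g₁ A * g₂ B + g₁ B * g₂ A, by
    intro A B
    by_cases h : A = B
    · subst h; rfl
    · simp only [if_neg h, if_neg (Ne.symm h)]; ring⟩

def moveAbs (g : (ℤ × ℤ) → ℤ) : (ℤ × ℤ) → ℤ := fun A => |g A|

def IsQMove (S : Finset (ℤ × ℤ)) (c : Sym2 (ℤ × ℤ) → ℤ) : Prop :=
  (∃ A g, A ∈ S ∧ IsMove S g ∧ g A = 0 ∧ c = boxProd (fun B => 2 * chi A B) g) ∨
  (∃ g, IsMove S g ∧ c = boxProd (moveAbs g) g)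

def StepList (S : Finset (ℤ × ℤ)) :
    List (Finset (ℤ × ℤ)) → List ((ℤ × ℤ) → ℤ) → Prop
  | [_], [] => True
  | I :: I' :: Ps, g :: L => LegalMove S I g I' ∧ StepList S (I' :: Ps) L
  | _, _ => False

def pOfSeq (A : ℤ × ℤ) : List (Finset (ℤ × ℤ)) → List ((ℤ × ℤ) → ℤ) → ℕ
  | I :: Ps, g :: L => (if g A ≠ 0 then 1 else if A ∈ I then 1 else 0) + pOfSeq A Ps L
  | _, _ => 0

def bothCount (A A' : ℤ × ℤ) : List ((ℤ × ℤ) → ℤ) → ℕ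
  | [] => 0
  | g :: L => (if g A ≠ 0 ∧ g A' ≠ 0 then 1 else 0) + bothCount A A' L

noncomputable def pagoda (P : ℤ × ℤ) : ℝ := ((Real.sqrt 5 - 1) / 2) ^ (P.1.natAbs + P.2.natAbs)

/-! A move `χ_P + χ_Q − χ_R` and its reverse `χ_R + χ_Q − χ_P` have sum `2χ_Q` and difference
`2χ_P − 2χ_R`. Hence `2χ` is constant modulo `V(𝔖,ℤ)` on each `≡`-class, and it is zero modulo
`V(𝔖,ℤ)` as soon as the class has a middle point, so `V(𝔖,ℤ)` contains every even function on a
board without isolated points. Since `V(𝔖,𝔽₂)` is the reduction of `V(𝔖,ℤ)`, a function whose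
reduction lies in `V(𝔖,𝔽₂)` differs from an element of `V(𝔖,ℤ)` by such an even function. -/

section SpanReduction

open Submodule

theorem mem_span_image_iff_exists {R A M N : Type*} [CommSemiring R] [Semiring A] [Algebra R A]
    [AddCommMonoid M] [AddCommMonoid N] [Module R M] [Module R N] [Module A N]
    [IsScalarTower R A N] (hA : Function.Surjective (algebraMap R A)) (φ : M →ₗ[R] N) {s : Set M}
    {y : N} : y ∈ span A (φ '' s) ↔ ∃ x ∈ span R s, φ x = y := by
  rw [← restrictScalars_mem R, restrictScalars_span R A hA, ← map_span, mem_map]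

variable {ι : Type*}

theorem intCast_mem_span_iff_exists_dvd_sub {n : ℕ} {s : Set (ι → ℤ)} {g : ι → ℤ} :
    (fun i => (g i : ZMod n)) ∈ span (ZMod n) ((fun f i => (f i : ZMod n)) '' s) ↔
      ∃ f ∈ span ℤ s, ∀ i, (n : ℤ) ∣ g i - f i := by
  simp only [← ZMod.intCast_eq_intCast_iff_dvd_sub]
  exact (mem_span_image_iff_exists ZMod.intCast_surjective
    ((Algebra.linearMap ℤ (ZMod n)).compLeft ι)).trans <| by simp [funext_iff]

theorem apply_eq_zero_of_mem_span {R : Type*} [Semiring R] {s : Set (ι → R)} {i : ι}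
    (hs : ∀ f ∈ s, f i = 0) {f : ι → R} (hf : f ∈ span R s) : f i = 0 :=
  (span_le (p := LinearMap.ker (LinearMap.proj i : (ι → R) →ₗ[R] R))).2 hs hf

variable [DecidableEq ι] {S : Finset ι}

theorem mem_of_forall_dvd_of_smul_single_mem {R : Type*} [CommSemiring R]
    {M : Submodule R (ι → R)} {a : R} (hM : ∀ i ∈ S, a • Pi.single i 1 ∈ M) {g : ι → R}
    (hg : ∀ i ∉ S, g i = 0) (ha : ∀ i ∈ S, a ∣ g i) : g ∈ M := by
  have hsum : g = ∑ i ∈ S, g i • Pi.single i 1 := by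
    ext j
    by_cases hj : j ∈ S
    · simp [Finset.sum_apply, Pi.single_apply, hj]
    · simp [Finset.sum_apply, Pi.single_apply, hj, hg j hj]
  rw [hsum]
  refine sum_mem fun i hi => ?_
  obtain ⟨k, hk⟩ := ha i hi
  rw [hk, mul_comm, mul_smul]
  exact M.smul_mem k (hM i hi)

theorem mem_span_iff_intCast_mem_span {n : ℕ} {s : Set (ι → ℤ)}
    (hs : ∀ f ∈ s, ∀ i ∉ S, f i = 0) (hn : ∀ i ∈ S, (n : ℤ) • Pi.single i 1 ∈ span ℤ s)
    {g : ι → ℤ} (hg : ∀ i ∉ S, g i = 0) :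
    g ∈ span ℤ s ↔
      (fun i => (g i : ZMod n)) ∈ span (ZMod n) ((fun f i => (f i : ZMod n)) '' s) := by
  rw [intCast_mem_span_iff_exists_dvd_sub]
  refine ⟨fun hgs => ⟨g, hgs, by simp⟩, fun ⟨f, hf, hdvd⟩ => ?_⟩
  have hf_supp : ∀ i ∉ S, f i = 0 := fun i hi =>
    apply_eq_zero_of_mem_span (fun f' hf' => hs f' hf' i hi) hf
  have hsub : g - f ∈ span ℤ s :=
    mem_of_forall_dvd_of_smul_single_mem hn (fun i hi => by simp [hg i hi, hf_supp i hi])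
      fun i _ => hdvd i
  exact (sub_mem_iff_left _ hf).1 hsub

end SpanReduction

theorem chi_eq_single (P : ℤ × ℤ) : chi P = Pi.single P 1 := by
  ext X
  simp only [chi, Pi.single_apply]

theorem neg_mem_dirs {d : ℤ × ℤ} (hd : d ∈ dirs) : -d ∈ dirs := by
  revert d
  decide

section Board

variable {S : Finset (ℤ × ℤ)}

theorem IsMove.apply_eq_zero {f : ℤ × ℤ → ℤ} (hf : IsMove S f) {X : ℤ × ℤ} (hX : X ∉ S) :
    f X = 0 := by
  obtain ⟨P, d, -, hP, hQ, hR, rfl⟩ := hf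
  have chi_apply {Y : ℤ × ℤ} (hY : Y ∈ S) : chi Y X = 0 := if_neg (ne_of_mem_of_not_mem hY hX).symm
  simp [chi_apply hP, chi_apply hQ, chi_apply hR]

/-- The module `V(𝔖,ℤ)` generated by the moves of the board. Its elements are functions on all of
`ℤ × ℤ` that vanish off the board. -/
def moveModule (S : Finset (ℤ × ℤ)) : Submodule ℤ (ℤ × ℤ → ℤ) :=
  Submodule.span ℤ {f | IsMove S f}

section Move

variable {P d : ℤ × ℤ} (hd : d ∈ dirs) (hP : P ∈ S) (hQ : P + d ∈ S) (hR : P + d + d ∈ S)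
include hd hP hQ hR

theorem move_mem_moveModule : chi P + chi (P + d) - chi (P + d + d) ∈ moveModule S :=
  Submodule.subset_span ⟨P, d, hd, hP, hQ, hR, rfl⟩

theorem reverse_move_mem_moveModule : chi (P + d + d) + chi (P + d) - chi P ∈ moveModule S := by
  have hmid : P + d + d + -d = P + d := add_neg_cancel_right _ _
  have hend : P + d + -d = P := add_neg_cancel_right _ _
  simpa only [hmid, hend] using move_mem_moveModule (S := S) (P := P + d + d) (d := -d)
    (neg_mem_dirs hd) hR (by rwa [hmid]) (by rwa [hmid, hend])

end Move

theorem IsMiddle.two_smul_chi_mem {Q : ℤ × ℤ} (hQ : IsMiddle S Q) :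
    (2 : ℤ) • chi Q ∈ moveModule S := by
  obtain ⟨P, d, hd, hP, hQ, hR, rfl⟩ := hQ
  convert add_mem (move_mem_moveModule hd hP hQ hR)
    (reverse_move_mem_moveModule hd hP hQ hR) using 1
  module

theorem Neighbor.two_smul_chi_smodEq {A B : ℤ × ℤ} (h : Neighbor S A B) :
    (2 : ℤ) • chi A ≡ (2 : ℤ) • chi B [SMOD moveModule S] := by
  obtain ⟨d, hd, hA, hQ, hB, rfl⟩ := h
  rw [SModEq.sub_mem]
  convert sub_mem (move_mem_moveModule hd hA hQ hB)
    (reverse_move_mem_moveModule hd hA hQ hB) using 1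
  module

theorem two_smul_chi_smodEq_of_eqvGen {A B : ℤ × ℤ} (h : Relation.EqvGen (Neighbor S) A B) :
    (2 : ℤ) • chi A ≡ (2 : ℤ) • chi B [SMOD moveModule S] := by
  induction h with
  | rel A B hAB => exact hAB.two_smul_chi_smodEq
  | refl A => rfl
  | symm A B _ hAB => exact hAB.symm
  | trans A B C _ _ hAB hBC => exact hAB.trans hBC

theorem NoIsolatedPoint.two_smul_chi_mem (hS : NoIsolatedPoint S) {P : ℤ × ℤ} (hP : P ∈ S) :
    (2 : ℤ) • chi P ∈ moveModule S := by
  obtain ⟨Q, hPQ, hQ⟩ := hS P hP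
  exact SModEq.zero.1 <|
    (two_smul_chi_smodEq_of_eqvGen hPQ).trans (SModEq.zero.2 hQ.two_smul_chi_mem)

end Board

/-- For a board with no isolated point, a function `g : S → ℤ` lies in `V(S,ℤ)`
iff its reduction mod 2 lies in `V(S,𝔽₂)`. -/
theorem mem_span_iff_mod_two (S : Finset (ℤ × ℤ)) (hS : NoIsolatedPoint S)
    (g : (ℤ × ℤ) → ℤ) (hsupp : ∀ P, P ∉ S → g P = 0) :
    g ∈ Submodule.span ℤ {f | IsMove S f} ↔
      (fun P => (g P : ZMod 2)) ∈
        Submodule.span (ZMod 2)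
          ((fun (f : (ℤ × ℤ) → ℤ) (P : ℤ × ℤ) => (f P : ZMod 2)) '' {f | IsMove S f}) := by
  have moves_supported : ∀ f ∈ {f | IsMove S f}, ∀ P ∉ S, f P = 0 :=
    fun _ hf _ hP => IsMove.apply_eq_zero hf hP
  have two_single_mem (P : ℤ × ℤ) (hP : P ∈ S) :
      ((2 : ℕ) : ℤ) • Pi.single P 1 ∈ Submodule.span ℤ {f | IsMove S f} := by
    rw [← chi_eq_single]
    exact hS.two_smul_chi_mem hP
  exact mem_span_iff_intCast_mem_span moves_supported two_single_mem hsupp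
end

section
/- Let 𝔖 be a board, let I and J be positions on 𝔖, and suppose χ_I − χ_J = Σ_{g∈𝒟(𝔖)} x(g)·g with all x(g) nonnegative integers. Then x(g₀) ≤ 17 for every move g₀ ∈ 𝒟(𝔖); i.e. the thickness of any move on any board is bounded above by 17. -/
/-!
The total of a resource count `π` never increases when a move is played, so the linear functional
`g ↦ ∑ π(A) g(A)` is nonnegative on every move. If a nonnegative combination `∑ x(g) g` of moves is
at most `1` on the board and `π ≥ 0`, then evaluating the functional on the combination gives
`x(g₀) ∑ π(A) g₀(A) ≤ ∑ π(A)` for each move `g₀`. Since `φ⁻¹ + φ⁻² = 1`, the function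
`π(A) = φ^(-‖A - Q‖₁)` is a resource count for every centre `Q`. When `Q` is the middle of `g₀` its
two outer points are equidistant from `Q`, so the functional equals `1` on `g₀`. The total resource
over `ℤ²` is the square of `∑ φ^(-|k|) = φ³`, so `x(g₀) ≤ φ⁶ = 8φ + 5 < 18`.
-/

open Finset
open scoped goldenRatio

section GoldenRatio

open Real

lemma inv_goldenRatio_nonneg : 0 ≤ φ⁻¹ := inv_nonneg.2 goldenRatio_pos.le

lemma inv_goldenRatio_lt_one : φ⁻¹ < 1 := inv_lt_one_of_one_lt₀ one_lt_goldenRatio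

lemma inv_goldenRatio_pow_add_inv_goldenRatio_pow (n : ℕ) :
    φ⁻¹ ^ (n + 2) + φ⁻¹ ^ (n + 1) = φ⁻¹ ^ n := by
  have h : φ⁻¹ ^ 2 + φ⁻¹ = 1 := by
    rw [inv_goldenRatio, neg_sq, goldenConj_sq]
    ring
  calc φ⁻¹ ^ (n + 2) + φ⁻¹ ^ (n + 1) = φ⁻¹ ^ n * (φ⁻¹ ^ 2 + φ⁻¹) := by ring
    _ = φ⁻¹ ^ n := by rw [h, mul_one]

lemma one_add_inv_goldenRatio_div_one_sub : (1 + φ⁻¹) / (1 - φ⁻¹) = φ ^ 3 :=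
  calc (1 + φ⁻¹) / (1 - φ⁻¹) = φ / φ⁻¹ ^ 2 := by
        rw [inv_goldenRatio, neg_sq, goldenConj_sq, ← sub_eq_add_neg, one_sub_goldenRatio,
          sub_neg_eq_add, add_comm 1]
    _ = φ ^ 3 := by rw [inv_pow, div_inv_eq_mul, ← pow_succ']

lemma goldenRatio_pow_six_lt : φ ^ 6 < 18 := by
  have h : √5 < 9 / 4 := (sqrt_lt' (by norm_num)).2 (by norm_num)
  have hφ : φ * 8 + 5 = φ ^ 6 := by
    norm_num [← goldenRatio_mul_fib_succ_add_fib 5]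
  rw [← hφ, goldenRatio]
  linarith

end GoldenRatio

lemma hasSum_pow_natAbs {K : Type*} [NormedField K] {r : K} (hr : ‖r‖ < 1) :
    HasSum (fun k : ℤ ↦ r ^ k.natAbs) ((1 + r) / (1 - r)) := by
  have hgeom := hasSum_geometric_of_norm_lt_one hr
  have hr' : 1 - r ≠ 0 := by
    rw [sub_ne_zero]
    rintro rfl
    simp at hr
  have hval : (1 - r)⁻¹ + (1 - r)⁻¹ - 1 = (1 + r) / (1 - r) := by
    field_simp
    ring
  rw [← hval]
  simpa using HasSum.of_nat_of_neg (f := fun k : ℤ ↦ r ^ k.natAbs) (by simpa using hgeom)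
    (by simpa using hgeom)

section Pagoda

/-- The `ℓ¹` norm on `ℤ²`, the exponent in `pagoda`. -/
def taxicabNorm (P : ℤ × ℤ) : ℕ := P.1.natAbs + P.2.natAbs

lemma taxicabNorm_neg (P : ℤ × ℤ) : taxicabNorm (-P) = taxicabNorm P := by
  simp [taxicabNorm]

lemma taxicabNorm_le_taxicabNorm_add_dir {d : ℤ × ℤ} (hd : d ∈ dirs) (P : ℤ × ℤ) :
    taxicabNorm P ≤ taxicabNorm (P + d) + 1 := by
  simp only [dirs, mem_insert, mem_singleton] at hd
  rcases hd with rfl | rfl | rfl | rfl <;>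
    simp only [taxicabNorm, Prod.fst_add, Prod.snd_add] <;> omega

lemma pagoda_eq_inv_goldenRatio_pow (P : ℤ × ℤ) : pagoda P = φ⁻¹ ^ taxicabNorm P := by
  rw [pagoda, taxicabNorm, Real.inv_goldenRatio]
  ring

lemma pagoda_zero : pagoda 0 = 1 := by
  simp [pagoda]

lemma pagoda_neg (P : ℤ × ℤ) : pagoda (-P) = pagoda P := by
  simp only [pagoda_eq_inv_goldenRatio_pow, taxicabNorm_neg]

lemma pagoda_nonneg (P : ℤ × ℤ) : 0 ≤ pagoda P := by
  rw [pagoda_eq_inv_goldenRatio_pow]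
  exact pow_nonneg inv_goldenRatio_nonneg _

lemma pagoda_add_add_le {d : ℤ × ℤ} (hd : d ∈ dirs) (P : ℤ × ℤ) :
    pagoda (P + d + d) ≤ pagoda P + pagoda (P + d) := by
  have hPd : taxicabNorm (P + d) ≤ taxicabNorm (P + d + d) + 1 :=
    taxicabNorm_le_taxicabNorm_add_dir hd _
  have hP : taxicabNorm P ≤ taxicabNorm (P + d + d) + 2 := by
    linarith [taxicabNorm_le_taxicabNorm_add_dir hd P]
  simp only [pagoda_eq_inv_goldenRatio_pow]
  rw [← inv_goldenRatio_pow_add_inv_goldenRatio_pow]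
  exact add_le_add
    (pow_le_pow_of_le_one inv_goldenRatio_nonneg inv_goldenRatio_lt_one.le hP)
    (pow_le_pow_of_le_one inv_goldenRatio_nonneg inv_goldenRatio_lt_one.le hPd)

lemma isResourceCount_pagoda_sub (S : Finset (ℤ × ℤ)) (Q : ℤ × ℤ) :
    IsResourceCount S fun A ↦ pagoda (A - Q) := by
  intro P d hd _ _ _
  have h := pagoda_add_add_le hd (P - Q)
  rwa [sub_add_eq_add_sub, sub_add_eq_add_sub] at h

lemma hasSum_pagoda : HasSum pagoda (φ ^ 6) := by
  have hφ : ‖φ⁻¹‖ < 1 :=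
    (Real.norm_of_nonneg inv_goldenRatio_nonneg).trans_lt inv_goldenRatio_lt_one
  have hline : HasSum (fun k : ℤ ↦ φ⁻¹ ^ k.natAbs) (φ ^ 3) :=
    one_add_inv_goldenRatio_div_one_sub ▸ hasSum_pow_natAbs hφ
  have hpow : 0 ≤ fun k : ℤ ↦ φ⁻¹ ^ k.natAbs := fun _ ↦ pow_nonneg inv_goldenRatio_nonneg _
  have hplane := hline.mul hline (hline.summable.mul_of_nonneg hline.summable hpow hpow)
  rw [← pow_add] at hplane
  refine hplane.congr_fun fun P ↦ ?_
  rw [pagoda_eq_inv_goldenRatio_pow, taxicabNorm, pow_add]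

lemma sum_pagoda_sub_le (S : Finset (ℤ × ℤ)) (Q : ℤ × ℤ) :
    ∑ A ∈ S, pagoda (A - Q) ≤ φ ^ 6 := by
  have h : HasSum (fun A ↦ pagoda (A - Q)) (φ ^ 6) :=
    (Equiv.subRight Q).hasSum_iff (f := pagoda) |>.2 hasSum_pagoda
  exact sum_le_hasSum S (fun _ _ ↦ pagoda_nonneg _) h

end Pagoda

section ResourceCount

/-- The linear functional `g ↦ ∑ π(A) g(A)` on functions on the board `S`, for a weight `π`. Its
value on a move is the drop in the total weight of the position when that move is played. -/
def boardValue (S : Finset (ℤ × ℤ)) (π : ℤ × ℤ → ℝ) (g : ℤ × ℤ → ℤ) : ℝ := ∑ A ∈ S, π A * g A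

variable {S : Finset (ℤ × ℤ)} {π : ℤ × ℤ → ℝ}

lemma boardValue_chi_add_chi_sub_chi {P Q R : ℤ × ℤ} (hP : P ∈ S) (hQ : Q ∈ S) (hR : R ∈ S) :
    boardValue S π (chi P + chi Q - chi R) = π P + π Q - π R := by
  simp [boardValue, chi, mul_add, mul_sub, sum_add_distrib, hP, hQ, hR]

lemma IsResourceCount.boardValue_nonneg (hπ : IsResourceCount S π) {g : ℤ × ℤ → ℤ}
    (hg : IsMove S g) : 0 ≤ boardValue S π g := by
  obtain ⟨P, d, hd, hP, hPd, hPdd, rfl⟩ := hg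
  rw [boardValue_chi_add_chi_sub_chi hP hPd hPdd]
  exact sub_nonneg.2 (hπ P d hd hP hPd hPdd)

lemma IsResourceCount.coeff_mul_boardValue_le (hπ : IsResourceCount S π)
    (hπ₀ : ∀ A ∈ S, 0 ≤ π A) {D : Finset (ℤ × ℤ → ℤ)} (hD : ∀ g ∈ D, IsMove S g)
    {x : (ℤ × ℤ → ℤ) → ℝ} (hx₀ : ∀ g ∈ D, 0 ≤ x g) (hx : ∀ A ∈ S, ∑ g ∈ D, x g * g A ≤ 1)
    {g₀ : ℤ × ℤ → ℤ} (hg₀ : g₀ ∈ D) :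
    x g₀ * boardValue S π g₀ ≤ ∑ A ∈ S, π A :=
  calc x g₀ * boardValue S π g₀
      ≤ ∑ g ∈ D, x g * boardValue S π g :=
        single_le_sum (f := fun g ↦ x g * boardValue S π g)
          (fun g hg ↦ mul_nonneg (hx₀ g hg) (hπ.boardValue_nonneg (hD g hg))) hg₀
    _ = ∑ A ∈ S, π A * ∑ g ∈ D, x g * g A := by
        simp only [boardValue, mul_sum, mul_left_comm]
        exact sum_comm
    _ ≤ ∑ A ∈ S, π A :=
        sum_le_sum fun A hA ↦ mul_le_of_le_one_right (hπ₀ A hA) (hx A hA)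

end ResourceCount

lemma boardValue_pagoda_sub_middle {S : Finset (ℤ × ℤ)} {P d : ℤ × ℤ} (hP : P ∈ S)
    (hPd : P + d ∈ S) (hPdd : P + d + d ∈ S) :
    boardValue S (fun A ↦ pagoda (A - (P + d))) (chi P + chi (P + d) - chi (P + d + d)) = 1 := by
  rw [boardValue_chi_add_chi_sub_chi hP hPd hPdd, sub_add_cancel_left, sub_self,
    add_sub_cancel_left, pagoda_neg, pagoda_zero]
  ring

theorem universal_thickness_bound_general {S : Finset (ℤ × ℤ)} {D : Finset (ℤ × ℤ → ℤ)}
    (hD : ∀ g ∈ D, IsMove S g) {x : (ℤ × ℤ → ℤ) → ℝ} (hx₀ : ∀ g ∈ D, 0 ≤ x g)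
    (hx : ∀ A ∈ S, ∑ g ∈ D, x g * g A ≤ 1) {g₀ : ℤ × ℤ → ℤ} (hg₀ : g₀ ∈ D) :
    x g₀ ≤ φ ^ 6 := by
  obtain ⟨P, d, -, hP, hPd, hPdd, rfl⟩ := hD g₀ hg₀
  have h := (isResourceCount_pagoda_sub S (P + d)).coeff_mul_boardValue_le
    (fun _ _ ↦ pagoda_nonneg _) hD hx₀ hx hg₀
  rw [boardValue_pagoda_sub_middle hP hPd hPdd, mul_one] at h
  exact h.trans (sum_pagoda_sub_le S (P + d))

lemma chiSet_sub_chiSet_le_one (I J : Finset (ℤ × ℤ)) (A : ℤ × ℤ) :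
    (chiSet I - chiSet J) A ≤ 1 := by
  simp only [Pi.sub_apply, chiSet]
  split_ifs <;> norm_num

lemma sum_coeff_mul_le_one_of_chiSet_sub_eq {I J : Finset (ℤ × ℤ)} {D : Finset (ℤ × ℤ → ℤ)}
    {x : (ℤ × ℤ → ℤ) → ℕ} (hx : chiSet I - chiSet J = ∑ g ∈ D, (x g : ℤ) • g) (A : ℤ × ℤ) :
    ∑ g ∈ D, (x g : ℝ) * g A ≤ 1 := by
  have h := chiSet_sub_chiSet_le_one I J A
  simp only [hx, Finset.sum_apply, Pi.smul_apply, smul_eq_mul] at h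
  exact_mod_cast h

/-- Universal thickness bound: if `χ_I − χ_J = Σ_{g ∈ 𝒟(S)} x(g)·g` with
nonnegative integer coefficients, then every coefficient satisfies `x(g₀) ≤ 17`. -/
theorem universal_thickness_bound (S I J : Finset (ℤ × ℤ)) (hI : I ⊆ S) (hJ : J ⊆ S)
    (D : Finset ((ℤ × ℤ) → ℤ)) (hD : ∀ g, g ∈ D ↔ IsMove S g)
    (x : ((ℤ × ℤ) → ℤ) → ℕ)
    (hx : chiSet I - chiSet J = ∑ g ∈ D, (x g : ℤ) • g)
    (g₀ : (ℤ × ℤ) → ℤ) (hg₀ : g₀ ∈ D) :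
    x g₀ ≤ 17 := by
  have h : (x g₀ : ℝ) ≤ φ ^ 6 := universal_thickness_bound_general (x := fun g ↦ x g)
    (fun g ↦ (hD g).1) (fun _ _ ↦ Nat.cast_nonneg _)
    (fun A _ ↦ sum_coeff_mul_le_one_of_chiSet_sub_eq hx A) hg₀
  exact Nat.lt_succ_iff.1 (by exact_mod_cast h.trans_lt goldenRatio_pow_six_lt)
end

section
/- Assume one can go from the position I to the position J in legal moves. Then there exist nonnegative integers x(g) for g ∈ 𝒟(𝔖) and y_g(A) for g ∈ 𝒟(𝔖), A ∈ 𝔖 with g(A) = 0, such that: (i) χ_I⊠χ_I − χ_J⊠χ_J = Σ_g x(g)·(|g|⊠g) + Σ_g Σ_A y_g(A)·(2χ_A⊠g); (ii) the flatness constraints 0 ≤ y_g(A) ≤ x(g) hold for all g and A; and (iii) for every A ∈ 𝔖, 0 ≤ Σ_g y_g(A) + Σ_{g : g(A)≠0} x(g) ≤ |I| − |J|. -/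
/-!
Indicator functions take only the values `0` and `1`, so a legal move `g = χ_I - χ_I'` satisfies
`χ_I + χ_I' = |g| + Σ_{g(A) = 0} χ_I(A) · 2χ_A`. Boxing with `g` and factoring the difference of
squares, `χ_I⊠χ_I - χ_I'⊠χ_I' = (χ_I + χ_I')⊠g` becomes the sum of `|g|⊠g` and of the `2χ_A⊠g` over
the points `A ∈ I` with `g(A) = 0`. Summed along the game, this is the decomposition in which `x(g)`
counts the uses of `g` and `y_g(A)` counts those uses during which `A` is occupied but not involved.
Each step contributes at most `1` to the sum attached to a given `A`, and there are `|I| - |J|`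
steps because every move removes exactly one peg.
-/

lemma boxProd_mk (f g : (ℤ × ℤ) → ℤ) (A B : ℤ × ℤ) :
    boxProd f g s(A, B) = if A = B then f A * g A else f A * g B + f B * g A := rfl

/-- The product `f ⊠ g` as a linear function of `f`, so that `map_add` and `map_sum` apply. -/
def boxProdLeft (g : (ℤ × ℤ) → ℤ) : ((ℤ × ℤ) → ℤ) →ₗ[ℤ] (Sym2 (ℤ × ℤ) → ℤ) where
  toFun f := boxProd f g
  map_add' f f' := by
    ext p
    induction p with | _ A B
    simp only [Pi.add_apply, boxProd_mk]
    split_ifs <;> ring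
  map_smul' c f := by
    ext p
    induction p with | _ A B
    simp only [Pi.smul_apply, smul_eq_mul, boxProd_mk, RingHom.id_apply]
    split_ifs <;> ring

lemma boxProdLeft_apply (f g : (ℤ × ℤ) → ℤ) : boxProdLeft g f = boxProd f g := rfl

lemma boxProd_self_sub_boxProd_self (f g : (ℤ × ℤ) → ℤ) :
    boxProd f f - boxProd g g = boxProd (f + g) (f - g) := by
  ext p
  induction p with | _ A B
  simp only [Pi.sub_apply, Pi.add_apply, boxProd_mk]
  split_ifs <;> ring

section Indicator

variable {S I : Finset (ℤ × ℤ)}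

lemma sum_smul_two_mul_chi_apply (T : Finset (ℤ × ℤ)) (c : (ℤ × ℤ) → ℤ) (B : ℤ × ℤ) :
    (∑ A ∈ T, c A • fun B => 2 * chi A B) B = if B ∈ T then 2 * c B else 0 := by
  simp [chi, mul_comm]

lemma chiSet_add_chiSet (hI : I ⊆ S) (I' : Finset (ℤ × ℤ)) :
    chiSet I + chiSet I' = moveAbs (chiSet I - chiSet I') +
      ∑ A ∈ S with (chiSet I - chiSet I') A = 0, chiSet I A • fun B => 2 * chi A B := by
  ext B
  rw [Pi.add_apply, Pi.add_apply, sum_smul_two_mul_chi_apply]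
  simp only [Finset.mem_filter]
  have hB : B ∈ I → B ∈ S := @hI B
  by_cases hBI : B ∈ I <;> by_cases hBI' : B ∈ I' <;> simp [chiSet, moveAbs, hBI, hBI', hB]

lemma boxProd_chiSet_sub_boxProd_chiSet (hI : I ⊆ S) (I' : Finset (ℤ × ℤ)) :
    boxProd (chiSet I) (chiSet I) - boxProd (chiSet I') (chiSet I') =
      boxProd (moveAbs (chiSet I - chiSet I')) (chiSet I - chiSet I') +
        ∑ A ∈ S with (chiSet I - chiSet I') A = 0,
          chiSet I A • boxProd (fun B => 2 * chi A B) (chiSet I - chiSet I') := by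
  rw [boxProd_self_sub_boxProd_self, chiSet_add_chiSet hI I']
  simp only [← boxProdLeft_apply, map_add, map_sum, map_smul]

end Indicator

lemma ne_zero_of_mem_dirs {d : ℤ × ℤ} (hd : d ∈ dirs) : d ≠ 0 := by
  rintro rfl
  exact absurd hd (by decide)

namespace LegalMove

variable {S I I' : Finset (ℤ × ℤ)} {g : (ℤ × ℤ) → ℤ}

lemma isMove (h : LegalMove S I g I') : IsMove S g := by
  obtain ⟨P, d, hd, hP, hQ, hR, hg, -⟩ := h
  exact ⟨P, d, hd, hP, hQ, hR, hg⟩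

lemma subset (h : LegalMove S I g I') (hI : I ⊆ S) : I' ⊆ S := by
  obtain ⟨P, d, -, -, -, hR, -, -, -, -, rfl⟩ := h
  exact Finset.union_subset (Finset.sdiff_subset.trans hI) (Finset.singleton_subset_iff.2 hR)

lemma card_eq (h : LegalMove S I g I') : I.card = I'.card + 1 := by
  obtain ⟨P, d, hd, -, -, -, -, hP, hQ, hR, rfl⟩ := h
  have hpair : {P, P + d} ⊆ I := Finset.insert_subset hP (Finset.singleton_subset_iff.2 hQ)
  have hcard : ({P, P + d} : Finset (ℤ × ℤ)).card = 2 :=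
    Finset.card_pair (left_ne_add.2 (ne_zero_of_mem_dirs hd))
  have hle := Finset.card_le_card hpair
  rw [Finset.card_union_of_disjoint (by simp [hR]), Finset.card_sdiff_of_subset hpair,
    Finset.card_singleton]
  omega

lemma eq_chiSet_sub_chiSet (h : LegalMove S I g I') : g = chiSet I - chiSet I' := by
  obtain ⟨P, d, hd, -, -, -, rfl, hP, hQ, hR, rfl⟩ := h
  have hPQ : P ≠ P + d := left_ne_add.2 (ne_zero_of_mem_dirs hd)
  ext B
  simp only [chiSet, chi, Pi.sub_apply, Pi.add_apply, Finset.mem_union, Finset.mem_sdiff,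
    Finset.mem_insert, Finset.mem_singleton]
  grind

lemma boxProd_sub_boxProd (h : LegalMove S I g I') (hI : I ⊆ S) :
    boxProd (chiSet I) (chiSet I) - boxProd (chiSet I') (chiSet I') =
      boxProd (moveAbs g) g +
        ∑ A ∈ S with g A = 0, chiSet I A • boxProd (fun B => 2 * chi A B) g := by
  obtain rfl := h.eq_chiSet_sub_chiSet
  exact boxProd_chiSet_sub_boxProd_chiSet hI I'

end LegalMove

/-- A single step of a game on the board `S`: a legal move together with the positions before and
after it. -/
structure GameStep (S : Finset (ℤ × ℤ)) where
  source : Finset (ℤ × ℤ)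
  move : (ℤ × ℤ) → ℤ
  target : Finset (ℤ × ℤ)
  legal : LegalMove S source move target
  source_subset : source ⊆ S

lemma Transforms.exists_telescoping_gameSteps {S I J : Finset (ℤ × ℤ)}
    {L : List ((ℤ × ℤ) → ℤ)} (hI : I ⊆ S) (h : Transforms S L I J) :
    ∃ (n : ℕ) (s : Fin n → GameStep S), ∀ {M : Type*} [AddCommGroup M] (F : Finset (ℤ × ℤ) → M),
      F I - F J = ∑ i, (F (s i).source - F (s i).target) := by
  induction L generalizing I with
  | nil =>
    obtain rfl : I = J := h
    exact ⟨0, Fin.elim0, by simp⟩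
  | cons g L ih =>
    obtain ⟨I', hmove, hrest⟩ := h
    obtain ⟨n, s, hs⟩ := ih (hmove.subset hI) hrest
    refine ⟨n + 1, Fin.cons ⟨I, g, I', hmove, hI⟩ s, fun F => ?_⟩
    simp only [Fin.sum_univ_succ, Fin.cons_zero, Fin.cons_succ, ← hs, sub_add_sub_cancel]

namespace GameStep

open Finset

variable {S : Finset (ℤ × ℤ)} {ι : Type*} [Fintype ι]

open Classical in
/-- The coefficient `x(g)` of a family of steps: the number of times the move `g` is made. -/
noncomputable def moveCount (s : ι → GameStep S) (g : (ℤ × ℤ) → ℤ) : ℕ :=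
  #{i | (s i).move = g}

open Classical in
/-- The coefficient `y_g(A)` of a family of steps: the number of times the move `g` is made while
the point `A` is occupied but not involved. It is `0` when `g A ≠ 0`. -/
noncomputable def bystanderCount (s : ι → GameStep S) (g : (ℤ × ℤ) → ℤ) (A : ℤ × ℤ) : ℕ :=
  #{i | (s i).move = g ∧ A ∈ (s i).source ∧ g A = 0}

lemma bystanderCount_le_moveCount (s : ι → GameStep S) (g : (ℤ × ℤ) → ℤ) (A : ℤ × ℤ) :
    bystanderCount s g A ≤ moveCount s g := by
  classical
  exact card_le_card (monotone_filter_right _ fun _ _ h => h.1)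

lemma sum_moveCount {D : Finset ((ℤ × ℤ) → ℤ)} {s : ι → GameStep S}
    (hs : ∀ i, (s i).move ∈ D) (p : ((ℤ × ℤ) → ℤ) → Prop) [DecidablePred p] :
    ∑ g ∈ D with p g, moveCount s g = #{i | p (s i).move} := by
  classical
  rw [card_eq_sum_card_fiberwise (f := fun i => (s i).move) (t := D.filter p)
    (fun i hi => by simpa [hs i] using hi)]
  refine sum_congr rfl fun g hg => congrArg card ?_
  ext i
  have := (mem_filter.1 hg).2
  aesop

lemma sum_bystanderCount {D : Finset ((ℤ × ℤ) → ℤ)} {s : ι → GameStep S}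
    (hs : ∀ i, (s i).move ∈ D) (A : ℤ × ℤ) :
    ∑ g ∈ D, bystanderCount s g A = #{i | A ∈ (s i).source ∧ (s i).move A = 0} := by
  classical
  rw [card_eq_sum_card_fiberwise (f := fun i => (s i).move) (t := D) (fun i _ => hs i)]
  refine sum_congr rfl fun g _ => congrArg card ?_
  ext i
  simp only [mem_filter, mem_univ, true_and]
  aesop

lemma sum_bystanderCount_add_sum_moveCount_le {D : Finset ((ℤ × ℤ) → ℤ)} {s : ι → GameStep S}
    (hs : ∀ i, (s i).move ∈ D) (A : ℤ × ℤ) :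
    ∑ g ∈ D, bystanderCount s g A + ∑ g ∈ D with g A ≠ 0, moveCount s g ≤ Fintype.card ι := by
  classical
  rw [sum_bystanderCount hs, sum_moveCount hs]
  calc #{i | A ∈ (s i).source ∧ (s i).move A = 0} + #{i | (s i).move A ≠ 0}
      ≤ #{i | (s i).move A = 0} + #{i | (s i).move A ≠ 0} := by
        gcongr with i
        exact And.right
    _ = Fintype.card ι := card_filter_add_card_filter_not _

lemma sum_boxProd_sub_boxProd {D : Finset ((ℤ × ℤ) → ℤ)} {s : ι → GameStep S}
    (hs : ∀ i, (s i).move ∈ D) :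
    ∑ i, (boxProd (chiSet (s i).source) (chiSet (s i).source) -
        boxProd (chiSet (s i).target) (chiSet (s i).target)) =
      ∑ g ∈ D, ((moveCount s g : ℤ) • boxProd (moveAbs g) g +
        ∑ A ∈ S with g A = 0,
          (bystanderCount s g A : ℤ) • boxProd (fun B => 2 * chi A B) g) := by
  classical
  have occupied_card (g : (ℤ × ℤ) → ℤ) (A : ℤ × ℤ) (hA : g A = 0) :
      ∑ i with (s i).move = g, chiSet (s i).source A = bystanderCount s g A := by
    simp [chiSet, bystanderCount, hA, filter_filter]
  rw [← sum_fiberwise_of_maps_to (fun i _ => hs i)]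
  refine sum_congr rfl fun g _ => ?_
  calc ∑ i with (s i).move = g, (boxProd (chiSet (s i).source) (chiSet (s i).source) -
        boxProd (chiSet (s i).target) (chiSet (s i).target))
      = ∑ i with (s i).move = g, (boxProd (moveAbs g) g +
          ∑ A ∈ S with g A = 0,
            chiSet (s i).source A • boxProd (fun B => 2 * chi A B) g) := by
        refine sum_congr rfl fun i hi => ?_
        obtain rfl := (mem_filter.1 hi).2
        exact (s i).legal.boxProd_sub_boxProd (s i).source_subset
    _ = (moveCount s g : ℤ) • boxProd (moveAbs g) g +
          ∑ A ∈ S with g A = 0,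
            (bystanderCount s g A : ℤ) • boxProd (fun B => 2 * chi A B) g := by
        rw [sum_add_distrib, sum_const, sum_comm, natCast_zsmul, moveCount]
        congr 1
        refine sum_congr rfl fun A hA => ?_
        rw [← sum_smul, occupied_card g A (mem_filter.1 hA).2]

lemma sum_card_sub_card (s : ι → GameStep S) :
    ∑ i, (((s i).source.card : ℤ) - (s i).target.card) = Fintype.card ι := by
  simp [(s _).legal.card_eq]

end GameStep

/-- If one can go from `I` to `J` in legal moves then there are nonnegative
integers `x(g)` and `y_g(A)` realising the quadratic decomposition, satisfying
the flatness constraints `y_g(A) ≤ x(g)` and the fundamental inequality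
`Σ_g y_g(A) + Σ_{g(A)≠0} x(g) ≤ |I| − |J|` for every `A ∈ S`. -/
theorem quadratic_with_flatness (S I J : Finset (ℤ × ℤ)) (hI : I ⊆ S)
    (D : Finset ((ℤ × ℤ) → ℤ)) (hD : ∀ g, g ∈ D ↔ IsMove S g)
    (L : List ((ℤ × ℤ) → ℤ)) (h : Transforms S L I J) :
    ∃ (x : ((ℤ × ℤ) → ℤ) → ℕ) (y : ((ℤ × ℤ) → ℤ) → (ℤ × ℤ) → ℕ),
      boxProd (chiSet I) (chiSet I) - boxProd (chiSet J) (chiSet J) =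
          (∑ g ∈ D, ((x g : ℤ) • boxProd (moveAbs g) g +
            ∑ A ∈ S.filter (fun A => g A = 0),
              (y g A : ℤ) • boxProd (fun B => 2 * chi A B) g)) ∧
        (∀ g ∈ D, ∀ A ∈ S, g A = 0 → y g A ≤ x g) ∧
        (∀ A ∈ S, ((∑ g ∈ D, y g A : ℕ) : ℤ) +
            (∑ g ∈ D.filter (fun g => g A ≠ 0), (x g : ℤ))
          ≤ (I.card : ℤ) - (J.card : ℤ)) := by
  obtain ⟨n, s, telescope⟩ := h.exists_telescoping_gameSteps hI
  have hs : ∀ i, (s i).move ∈ D := fun i => (hD _).2 (s i).legal.isMove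
  refine ⟨GameStep.moveCount s, GameStep.bystanderCount s, ?_,
    fun g _ A _ _ => GameStep.bystanderCount_le_moveCount s g A, fun A _ => ?_⟩
  · rw [telescope fun K => boxProd (chiSet K) (chiSet K), GameStep.sum_boxProd_sub_boxProd hs]
  · rw [telescope fun K => (K.card : ℤ), GameStep.sum_card_sub_card]
    exact_mod_cast GameStep.sum_bystanderCount_add_sum_moveCount_le hs A
end
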